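/- Consider the double pendulum on a wheel: mass matrix on ℝ³ with entries g_{ij}(x) = m_{ij} cos(x^i − x^j) for i,j ∈ {1,2,3}, where the parameters m_{ij} = m_{ji} are positive and g(x) is invertible for every x ∈ ℝ³; the unactuated degrees of freedom are a = 1,2 (so m = 2). If λ : ℝ³ → ℝ^{2×3} is a smooth solution of the λ-equations ∂(g_{ai}λ_b^i)/∂x^k − [ka,i]λ_b^i − [kb,i]λ_a^i = 0 (all k = 1,2,3 and a,b = 1,2), then λ_1^3 ≡ 0 and λ_2^3 ≡ 0 on ℝ³. -/

import Mathlib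

/-- Partial derivative in the `k`-th coordinate direction. -/
noncomputable def pd {n : ℕ} (k : Fin n) (f : (Fin n → ℝ) → ℝ) (x : Fin n → ℝ) : ℝ :=
  fderiv ℝ f x (Pi.single k 1)

/-- Christoffel symbol of the first kind `[ij,k]` of the matrix-valued map `g`. -/
noncomputable def chr {n : ℕ} (g : (Fin n → ℝ) → Matrix (Fin n) (Fin n) ℝ)
    (i j k : Fin n) (x : Fin n → ℝ) : ℝ :=
  (1/2) * (pd i (fun y => g y j k) x + pd j (fun y => g y i k) x - pd k (fun y => g y i j) x)

/-- Mass matrix of the double pendulum on a wheel: `g_{ij} = m_{ij} cos(xⁱ − xʲ)`. -/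
noncomputable def gDP (m : Matrix (Fin 3) (Fin 3) ℝ) (x : Fin 3 → ℝ) :
    Matrix (Fin 3) (Fin 3) ℝ :=
  Matrix.of fun i j => m i j * Real.cos (x i - x j)

/-!
For the metric `g_{ij} = m_{ij} cos(xⁱ − xʲ)` the symbol `[ij,k]` vanishes unless `i = j`, so the
λ-equations read `∂_k P_{ab} = -δ_{ka} S_{ab} - δ_{kb} S_{ba}`, where `P_{ab} = g_{ai} λ_b^i` and
`S_{ab} = m_{ai} sin(xᵃ − xⁱ) λ_b^i`. Hence `P_{ab}` does not depend on the actuated coordinates;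
neither do its derivatives, in particular `S_{ab}`, nor, by the addition formula for the sine,
`m_{ai} sin(xᶜ − xⁱ) λ_b^i` for any unactuated `c`. If `xˢ` is the only actuated coordinate, then
for a suitable `c` a linear combination of these functions over `a` is a nonzero multiple of
`sin(xᶜ − xˢ) λ_b^s`, the term `i = c` being killed by the sine. As it does not depend on `xˢ` and
vanishes for `xˢ = xᶜ`, it is identically zero, and `λ_b^s = 0` by continuity.
-/

open Matrix

section PartialDerivatives

variable {n : ℕ} {f : (Fin n → ℝ) → ℝ} {s : Set (Fin n)}

theorem fderiv_eq_sum_pd (f : (Fin n → ℝ) → ℝ) (x v : Fin n → ℝ) :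
    fderiv ℝ f x v = ∑ k, v k * pd k f x := by
  conv_lhs => rw [← Finset.univ_sum_single v, map_sum]
  refine Finset.sum_congr rfl fun k _ => ?_
  rw [pd, ← smul_eq_mul, ← map_smul, ← Pi.single_smul, smul_eq_mul, mul_one]

theorem dependsOn_of_pd_eq_zero (hf : Differentiable ℝ f) (h : ∀ k ∉ s, ∀ x, pd k f x = 0) :
    DependsOn f s := by
  intro x y hxy
  have hderiv (t : ℝ) : HasDerivAt (f ∘ AffineMap.lineMap x y) 0 t := by
    have hsum : fderiv ℝ f (AffineMap.lineMap x y t) (y - x) = 0 := by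
      rw [fderiv_eq_sum_pd]
      refine Finset.sum_eq_zero fun k _ => ?_
      by_cases hk : k ∈ s
      · simp [hxy k hk]
      · simp [h k hk]
    exact hsum ▸ (hf _).hasFDerivAt.comp_hasDerivAt t AffineMap.hasDerivAt_lineMap
  simpa using is_const_of_deriv_eq_zero (fun t => (hderiv t).differentiableAt)
    (fun t => (hderiv t).deriv) 0 1

theorem dependsOn_pd (hf : DependsOn f s) (k : Fin n) : DependsOn (pd k f) s := by
  intro x y hxy
  have htranslate : (fun z => f (z + (y - x))) = f :=
    funext fun z => hf fun i hi => by simp [hxy i hi]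
  have hfderiv : fderiv ℝ f x = fderiv ℝ f y := by
    simpa [htranslate] using fderiv_comp_add_right (𝕜 := ℝ) (f := f) (x := x) (y - x)
  rw [pd, pd, hfderiv]

end PartialDerivatives

theorem eq_zero_of_sin_mul_eq_zero {f : ℝ → ℝ} (hf : Continuous f)
    (h : ∀ t, Real.sin t * f t = 0) : f = 0 := by
  have hcountable : {t : ℝ | Real.sin t = 0}.Countable :=
    (Set.countable_range fun k : ℤ => (k : ℝ) * Real.pi).mono fun _ ht => Real.sin_eq_zero_iff.1 ht
  exact hf.ext_on (hcountable.dense_compl ℝ) continuous_zero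
    fun t ht => (mul_eq_zero.1 (h t)).resolve_left ht

theorem exists_vecMul_castSucc_eq_zero_and_vecMul_last_ne_zero {K : Type*} [Field K] {p : ℕ}
    {B : Matrix (Fin p) (Fin (p + 1)) K} (hB : LinearIndependent K B.row)
    (hlast : ∃ a, B a (Fin.last p) ≠ 0) :
    ∃ (c : Fin p) (v : Fin p → K),
      (∀ i ≠ c, (v ᵥ* B) i.castSucc = 0) ∧ (v ᵥ* B) (Fin.last p) ≠ 0 := by
  set A : Matrix (Fin p) (Fin p) K := B.submatrix id Fin.castSucc
  by_cases hdet : A.det = 0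
  · obtain ⟨v, hv, hvA⟩ := exists_vecMul_eq_zero_iff.2 hdet
    obtain ⟨c, -⟩ := hlast
    have hcast (i : Fin p) : (v ᵥ* B) i.castSucc = 0 := congrFun hvA i
    refine ⟨c, v, fun i _ => hcast i, fun h => hv ?_⟩
    refine vecMul_injective_iff.2 hB (?_ : v ᵥ* B = 0 ᵥ* B)
    rw [zero_vecMul]
    exact funext (Fin.lastCases h hcast)
  · have hunit : IsUnit A.det := isUnit_iff_ne_zero.2 hdet
    have hsolve : A⁻¹ *ᵥ B.col (Fin.last p) ≠ 0 := fun h => by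
      obtain ⟨a, ha⟩ := hlast
      have hcol : B.col (Fin.last p) = 0 := by
        rw [← one_mulVec (B.col (Fin.last p)), ← mul_nonsing_inv A hunit, ← mulVec_mulVec, h,
          mulVec_zero]
      exact ha (congrFun hcol a)
    obtain ⟨c, hc⟩ := Function.ne_iff.1 hsolve
    refine ⟨c, A⁻¹ c, fun i hi => ?_, hc⟩
    calc (A⁻¹ c ᵥ* B) i.castSucc = (A⁻¹ * A) c i := rfl
      _ = 0 := by rw [nonsing_inv_mul A hunit, one_apply_ne hi.symm]

section LambdaEquations

variable {n p : ℕ}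

/-- The function `g_{ji} λ_b^i` of `x`, summed over `i`. -/
noncomputable def lowered (g : (Fin n → ℝ) → Matrix (Fin n) (Fin n) ℝ)
    (lam : (Fin n → ℝ) → Fin p → Fin n → ℝ) (j : Fin n) (b : Fin p) (x : Fin n → ℝ) : ℝ :=
  ∑ i, g x j i * lam x b i

/-- The λ-equations of the metric `g`. The unactuated degrees of freedom are indexed by `Fin p`,
the coordinate of the degree of freedom `a` being `u a`. -/
def IsLambdaSolution (g : (Fin n → ℝ) → Matrix (Fin n) (Fin n) ℝ) (u : Fin p → Fin n)
    (lam : (Fin n → ℝ) → Fin p → Fin n → ℝ) : Prop :=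
  ∀ (x : Fin n → ℝ) (k : Fin n) (a b : Fin p),
    pd k (lowered g lam (u a) b) x - ∑ i, chr g k (u a) i x * lam x b i
      - ∑ i, chr g k (u b) i x * lam x a i = 0

/-- The mass matrix `g_{ij} = m_{ij} cos(xⁱ − xʲ)` of a system of `n` linked rotating bodies;
for `n = 3` it is `gDP`. -/
noncomputable def cosMetric (m : Matrix (Fin n) (Fin n) ℝ) (x : Fin n → ℝ) :
    Matrix (Fin n) (Fin n) ℝ :=
  Matrix.of fun i j => m i j * Real.cos (x i - x j)

/-- The function `m_{ji} sin(xᶜ − xⁱ) λ_b^i` of `x`, summed over `i`. On solutions of the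
λ-equations with `c = j = u a` it is, up to a nonzero factor, the `j`-th partial derivative of
`lowered (cosMetric m) lam j b`. -/
noncomputable def sinSum (m : Matrix (Fin n) (Fin n) ℝ)
    (lam : (Fin n → ℝ) → Fin p → Fin n → ℝ) (j c : Fin n) (b : Fin p) (x : Fin n → ℝ) : ℝ :=
  ∑ i, m j i * Real.sin (x c - x i) * lam x b i

variable {m : Matrix (Fin n) (Fin n) ℝ} {u : Fin p → Fin n}
  {lam : (Fin n → ℝ) → Fin p → Fin n → ℝ}

theorem cosMetric_zero (m : Matrix (Fin n) (Fin n) ℝ) : cosMetric m 0 = m := by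
  ext
  simp [cosMetric]

theorem linearIndependent_row_of_isUnit_det_cosMetric_zero (h : IsUnit (cosMetric m 0).det) :
    LinearIndependent ℝ m.row :=
  linearIndependent_rows_of_isUnit ((isUnit_iff_isUnit_det m).2 (cosMetric_zero m ▸ h))

theorem pd_cosMetric (m : Matrix (Fin n) (Fin n) ℝ) (k i j : Fin n) (x : Fin n → ℝ) :
    pd k (fun y => cosMetric m y i j) x =
      -(m i j * Real.sin (x i - x j)) *
        ((if i = k then 1 else 0) - (if j = k then 1 else 0)) := by
  have hcos := (((hasFDerivAt_apply (𝕜 := ℝ) i x).sub (hasFDerivAt_apply j x)).cos).const_mul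
    (m i j)
  have hfderiv : fderiv ℝ (fun y => cosMetric m y i j) x = _ := hcos.fderiv
  rw [pd, hfderiv]
  simp only [Pi.single_apply, Pi.sub_apply, _root_.smul_apply, _root_.sub_apply,
    ContinuousLinearMap.proj_apply, smul_eq_mul]
  ring

theorem chr_cosMetric (hm : m.IsSymm) (i j k : Fin n) (x : Fin n → ℝ) :
    chr (cosMetric m) i j k x = if i = j then -(m i k * Real.sin (x i - x k)) else 0 := by
  have hodd (i j : Fin n) : m j i * Real.sin (x j - x i) = -(m i j * Real.sin (x i - x j)) := by
    rw [hm.apply, ← neg_sub, Real.sin_neg, mul_neg]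
  simp only [chr, pd_cosMetric]
  rcases eq_or_ne i j with rfl | hij
  · rcases eq_or_ne k i with rfl | hki
    · simp
    · simp only [if_true, if_neg hki, sub_self, mul_zero]
      ring
  · simp only [if_neg hij, if_neg hij.symm]
    rcases eq_or_ne k i with rfl | hki
    · simp [hij, hij.symm, hodd k j]
    · rcases eq_or_ne k j with rfl | hkj
      · simp [hki, hki.symm]
      · simp [hki, hki.symm, hkj, hkj.symm]

theorem differentiable_lowered_cosMetric (m : Matrix (Fin n) (Fin n) ℝ)
    {b : Fin p} (hlam : ∀ i, Differentiable ℝ fun x => lam x b i) (j : Fin n) :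
    Differentiable ℝ (lowered (cosMetric m) lam j b) := by
  unfold lowered
  simp only [cosMetric, of_apply]
  fun_prop

theorem sinSum_eq_sin_mul_lowered_add (m : Matrix (Fin n) (Fin n) ℝ)
    (lam : (Fin n → ℝ) → Fin p → Fin n → ℝ) (j c : Fin n) (b : Fin p) (x : Fin n → ℝ) :
    sinSum m lam j c b x = Real.sin (x c - x j) * lowered (cosMetric m) lam j b x
      + Real.cos (x c - x j) * sinSum m lam j j b x := by
  simp only [sinSum, lowered, cosMetric, of_apply, Finset.mul_sum, ← Finset.sum_add_distrib]
  refine Finset.sum_congr rfl fun i _ => ?_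
  rw [← sub_add_sub_cancel (x c) (x j) (x i), Real.sin_add]
  ring

theorem sum_mul_sinSum (m : Matrix (Fin n) (Fin n) ℝ) (u : Fin p → Fin n)
    (lam : (Fin n → ℝ) → Fin p → Fin n → ℝ) (v : Fin p → ℝ) (c : Fin n) (b : Fin p)
    (x : Fin n → ℝ) :
    ∑ a, v a * sinSum m lam (u a) c b x =
      ∑ i, (v ᵥ* m.submatrix u id) i * (Real.sin (x c - x i) * lam x b i) := by
  simp only [sinSum, vecMul, dotProduct, submatrix_apply, id, Finset.mul_sum, Finset.sum_mul]
  rw [Finset.sum_comm]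
  exact Finset.sum_congr rfl fun i _ => Finset.sum_congr rfl fun a _ => by ring

namespace IsLambdaSolution

theorem pd_lowered (h : IsLambdaSolution (cosMetric m) u lam) (hm : m.IsSymm) (k : Fin n)
    (a b : Fin p) (x : Fin n → ℝ) :
    pd k (lowered (cosMetric m) lam (u a) b) x =
      -(if k = u a then sinSum m lam (u a) (u a) b x else 0)
        - (if k = u b then sinSum m lam (u b) (u b) a x else 0) := by
  have hchr (c d : Fin p) : ∑ i, chr (cosMetric m) k (u c) i x * lam x d i =
      -(if k = u c then sinSum m lam (u c) (u c) d x else 0) := by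
    simp only [chr_cosMetric hm]
    split_ifs with hk
    · simp [hk, sinSum]
    · simp
  have heq := h x k a b
  rw [hchr, hchr] at heq
  linear_combination heq

theorem dependsOn_lowered (h : IsLambdaSolution (cosMetric m) u lam) (hm : m.IsSymm)
    {b : Fin p} (hlam : ∀ i, Differentiable ℝ fun x => lam x b i) (a : Fin p) :
    DependsOn (lowered (cosMetric m) lam (u a) b) (Set.range u) := by
  refine dependsOn_of_pd_eq_zero (differentiable_lowered_cosMetric m hlam _) fun k hk x => ?_
  have hne (c : Fin p) : k ≠ u c := fun hc => hk ⟨c, hc.symm⟩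
  simp [h.pd_lowered hm, hne]

theorem pd_lowered_self (h : IsLambdaSolution (cosMetric m) u lam) (hm : m.IsSymm)
    (hu : Function.Injective u) (a b : Fin p) (x : Fin n → ℝ) :
    pd (u a) (lowered (cosMetric m) lam (u a) b) x =
      -(if a = b then 2 else 1) * sinSum m lam (u a) (u a) b x := by
  rw [h.pd_lowered hm]
  by_cases hab : a = b
  · subst hab
    simp only [if_true]
    ring
  · simp [hab, hu.eq_iff]

theorem dependsOn_sinSum (h : IsLambdaSolution (cosMetric m) u lam) (hm : m.IsSymm)
    (hu : Function.Injective u) {b : Fin p} (hlam : ∀ i, Differentiable ℝ fun x => lam x b i)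
    (a c : Fin p) :
    DependsOn (sinSum m lam (u a) (u c) b) (Set.range u) := by
  intro x y hxy
  have hlowered := h.dependsOn_lowered hm hlam a
  have hsinSum : sinSum m lam (u a) (u a) b x = sinSum m lam (u a) (u a) b y := by
    have hpd := dependsOn_pd hlowered (u a) hxy
    rw [h.pd_lowered_self hm hu, h.pd_lowered_self hm hu] at hpd
    exact mul_left_cancel₀ (by split_ifs <;> norm_num) hpd
  rw [sinSum_eq_sin_mul_lowered_add, sinSum_eq_sin_mul_lowered_add m lam _ _ b y, hlowered hxy,
    hsinSum, hxy (u a) ⟨a, rfl⟩, hxy (u c) ⟨c, rfl⟩]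

theorem exists_sin_mul_last_eq_zero {m : Matrix (Fin (p + 1)) (Fin (p + 1)) ℝ}
    {lam : (Fin (p + 1) → ℝ) → Fin p → Fin (p + 1) → ℝ}
    (h : IsLambdaSolution (cosMetric m) Fin.castSucc lam) (hm : m.IsSymm)
    (hrows : LinearIndependent ℝ fun a : Fin p => m a.castSucc)
    (hlast : ∃ a : Fin p, m a.castSucc (Fin.last p) ≠ 0)
    (hlam : ∀ a i, Differentiable ℝ fun x => lam x a i) :
    ∃ c : Fin p, ∀ (b : Fin p) (x : Fin (p + 1) → ℝ),
      Real.sin (x c.castSucc - x (Fin.last p)) * lam x b (Fin.last p) = 0 := by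
  obtain ⟨c, v, hv, hvlast⟩ := exists_vecMul_castSucc_eq_zero_and_vecMul_last_ne_zero
    (B := m.submatrix Fin.castSucc id) hrows hlast
  refine ⟨c, fun b x => ?_⟩
  have hcollapse (y : Fin (p + 1) → ℝ) :
      ∑ a : Fin p, v a * sinSum m lam a.castSucc c.castSucc b y =
        (v ᵥ* m.submatrix Fin.castSucc id) (Fin.last p) *
          (Real.sin (y c.castSucc - y (Fin.last p)) * lam y b (Fin.last p)) := by
    rw [sum_mul_sinSum, Fin.sum_univ_castSucc, add_eq_right]
    refine Finset.sum_eq_zero fun i _ => ?_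
    by_cases hi : i = c
    · simp [hi]
    · rw [hv i hi, zero_mul]
  set y := Function.update x (Fin.last p) (x c.castSucc) with hy
  have hxy : ∀ i ∈ Set.range (Fin.castSucc (n := p)), x i = y i := by
    rintro _ ⟨i, rfl⟩
    simp [hy]
  refine (mul_eq_zero.1 ?_).resolve_left hvlast
  calc _ = ∑ a : Fin p, v a * sinSum m lam a.castSucc c.castSucc b x := (hcollapse x).symm
    _ = ∑ a : Fin p, v a * sinSum m lam a.castSucc c.castSucc b y := by
      simp only [h.dependsOn_sinSum hm (Fin.castSucc_injective p) (hlam b) _ c hxy]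
    _ = 0 := by simp [hcollapse, hy]

end IsLambdaSolution

end LambdaEquations

theorem double_pendulum_lambda_third_components_vanish_general {p : ℕ}
    {m : Matrix (Fin (p + 1)) (Fin (p + 1)) ℝ} (hm : m.IsSymm)
    (hrows : LinearIndependent ℝ fun a : Fin p => m a.castSucc)
    (hlast : ∃ a : Fin p, m a.castSucc (Fin.last p) ≠ 0)
    {lam : (Fin (p + 1) → ℝ) → Fin p → Fin (p + 1) → ℝ}
    (hlam : ∀ a i, Differentiable ℝ fun x => lam x a i)
    (h : IsLambdaSolution (cosMetric m) Fin.castSucc lam) (x : Fin (p + 1) → ℝ) (a : Fin p) :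
    lam x a (Fin.last p) = 0 := by
  obtain ⟨c, hc⟩ := h.exists_sin_mul_last_eq_zero hm hrows hlast hlam
  have hcont : Continuous fun t =>
      lam (Function.update x (Fin.last p) (x c.castSucc - t)) a (Fin.last p) :=
    (hlam a _).continuous.comp (by fun_prop)
  have hzero := eq_zero_of_sin_mul_eq_zero hcont fun t => by
    simpa using hc a (Function.update x (Fin.last p) (x c.castSucc - t))
  simpa using congrFun hzero (x c.castSucc - x (Fin.last p))

/-- For the double pendulum on a wheel (two unactuated degrees of freedom),
any smooth solution of the λ-equations has `λ₁³ ≡ 0` and `λ₂³ ≡ 0`. -/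
theorem double_pendulum_lambda_third_components_vanish
    (m : Matrix (Fin 3) (Fin 3) ℝ) (hmsym : m.IsSymm) (hmpos : ∀ i j, 0 < m i j)
    (hginv : ∀ x : Fin 3 → ℝ, IsUnit (gDP m x).det)
    (lam : (Fin 3 → ℝ) → Fin 2 → Fin 3 → ℝ)
    (hlam : ∀ a i, ContDiff ℝ (⊤ : ℕ∞) (fun x => lam x a i))
    (hlamEq : ∀ (x : Fin 3 → ℝ) (k : Fin 3) (a b : Fin 2),
      pd k (fun y => ∑ i, gDP m y (Fin.castSucc a) i * lam y b i) x
        - ∑ i, chr (gDP m) k (Fin.castSucc a) i x * lam x b i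
        - ∑ i, chr (gDP m) k (Fin.castSucc b) i x * lam x a i = 0) :
    ∀ (x : Fin 3 → ℝ) (a : Fin 2), lam x a 2 = 0 := by
  exact double_pendulum_lambda_third_components_vanish_general hmsym
    ((linearIndependent_row_of_isUnit_det_cosMetric_zero (hginv 0)).comp _
      (Fin.castSucc_injective 2))
    ⟨0, (hmpos _ _).ne'⟩ (fun a i => (hlam a i).differentiable (by simp)) hlamEq
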